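/- The general fractional derivative of Riemann–Liouville type is a right inverse operator to the general fractional integral on C_{-1,(κ)}(0,∞): let (κ, k) ∈ L₁ and let f = κ * φ with φ ∈ C_{-1}(0,∞). Then the function k * f is differentiable on (0,∞) and (κ * D_{(k)} f)(t) = f(t) for all t > 0. -/

import Mathlib

open Real Filter MeasureTheory intervalIntegral

/-- The Laplace convolution `(f * g)(t) = ∫_0^t f(t-τ) g(τ) dτ`. -/
noncomputable def lconv (f g : ℝ → ℝ) : ℝ → ℝ :=
  fun t => ∫ τ in (0:ℝ)..t, f (t - τ) * g τ

/-- The space `C_{-1}(0,∞)`: functions representable as `t^p f₁(t)` with `p > -1`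
and `f₁` continuous on `[0,∞)`. -/
def CMinusOne (f : ℝ → ℝ) : Prop :=
  ∃ p : ℝ, p > -1 ∧ ∃ f₁ : ℝ → ℝ, ContinuousOn f₁ (Set.Ici 0) ∧
    ∀ t > (0:ℝ), f t = t ^ p * f₁ t


/-- The class `L₁` of Sonin kernel pairs: `κ, k ∈ C_{-1}(0,∞)` with `(κ * k)(t) = 1`
for all `t > 0`. -/
def SoninPair (κ k : ℝ → ℝ) : Prop :=
  CMinusOne κ ∧ CMinusOne k ∧ ∀ t > (0:ℝ), lconv κ k t = 1

/-!
Since `k * f = k * (κ * φ) = (k * κ) * φ = 1 * φ`, the function `k * f` is the primitive of `φ`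
on `(0,∞)`, so `D_{(k)} f = φ` there and `κ * D_{(k)} f = κ * φ = f`.

Differentiability requires associativity at every `t`, not just almost everywhere. It holds for
functions that are integrable near `0` and locally bounded on `(0,∞)`: on each half of `[0,t]` one
factor of `∫_0^t f(t-τ) g(τ) dτ` is bounded, so the integral converges absolutely for every `t`,
and as a function of `t` it is again integrable near `0` and locally bounded on `(0,∞)`.
-/

section

open Set

section

variable {f f' g g' : ℝ → ℝ} {t T : ℝ}

lemma lconv_comm (f g : ℝ → ℝ) : lconv f g = lconv g f := by
  funext t
  have h := integral_comp_sub_left (a := 0) (b := t) (fun τ => f (t - τ) * g τ) t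
  simp only [sub_zero, sub_self, sub_sub_cancel] at h
  simp only [lconv]
  rw [← h]
  simp only [mul_comm]

lemma lconv_congr (ht : 0 ≤ t) (hf : EqOn f f' (Ioo 0 t)) (hg : EqOn g g' (Ioo 0 t)) :
    lconv f g t = lconv f' g' t := by
  simp only [lconv, integral_of_le ht, integral_Ioc_eq_integral_Ioo]
  refine setIntegral_congr_fun measurableSet_Ioo fun τ hτ => ?_
  have hsub : t - τ ∈ Ioo 0 t := ⟨sub_pos.2 hτ.2, sub_lt_self t hτ.1⟩
  simp only [hf hsub, hg hτ]

lemma lconv_one_left (f : ℝ → ℝ) (t : ℝ) : lconv (fun _ => 1) f t = ∫ τ in (0 : ℝ)..t, f τ := by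
  simp only [lconv, one_mul]

lemma posConvolution_mul_eq_indicator_lconv (f g : ℝ → ℝ) :
    posConvolution f g (ContinuousLinearMap.mul ℝ ℝ) = (Ioi 0).indicator (lconv f g) := by
  rw [lconv_comm]
  refine congrArg _ (funext fun x => ?_)
  simp only [lconv, ContinuousLinearMap.mul_apply', mul_comm]

lemma convolution_indicator_Ioi_eq_indicator_lconv (f g : ℝ → ℝ) :
    convolution ((Ioi 0).indicator f) ((Ioi 0).indicator g) (ContinuousLinearMap.mul ℝ ℝ) volume =
      (Ioi 0).indicator (lconv f g) := by
  rw [← posConvolution_eq_convolution_indicator f g _ volume,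
    posConvolution_mul_eq_indicator_lconv]

lemma integrableOn_lconv (hf : IntegrableOn f (Ioc 0 T)) (hg : IntegrableOn g (Ioc 0 T)) :
    IntegrableOn (lconv f g) (Ioc 0 T) := by
  have htrunc : Integrable ((Ioi 0).indicator
      (lconv ((Ioc 0 T).indicator f) ((Ioc 0 T).indicator g))) := by
    rw [← posConvolution_mul_eq_indicator_lconv]
    exact integrable_posConvolution (hf.integrable_indicator measurableSet_Ioc).integrableOn
      (hg.integrable_indicator measurableSet_Ioc).integrableOn _
  refine htrunc.integrableOn.congr_fun (fun t ht => ?_) measurableSet_Ioc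
  have hsub : Ioo 0 t ⊆ Ioc 0 T := fun τ hτ => ⟨hτ.1, hτ.2.le.trans ht.2⟩
  rw [indicator_of_mem (mem_Ioi.2 ht.1)]
  exact lconv_congr ht.1.le ((eqOn_indicator (s := Ioc 0 T)).mono hsub)
    ((eqOn_indicator (s := Ioc 0 T)).mono hsub)

end

/-- Functions on `(0,∞)` that are integrable near `0` and bounded on compact subsets of `(0,∞)`:
a class containing `C_{-1}(0,∞)` on which the Laplace convolution converges absolutely at every
point and is associative. Values on `(-∞,0]` are unconstrained. -/
structure IsConvKernel (f : ℝ → ℝ) : Prop where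
  integrableOn : ∀ T, IntegrableOn f (Ioc 0 T)
  exists_bound : ∀ a > 0, ∀ b, ∃ C, ∀ t ∈ Icc a b, ‖f t‖ ≤ C

namespace IsConvKernel

variable {f g h : ℝ → ℝ} {t : ℝ}

lemma of_continuousOn (hc : ContinuousOn f (Ioi 0)) (hi : ∀ T, IntegrableOn f (Ioc 0 T)) :
    IsConvKernel f where
  integrableOn := hi
  exists_bound _ ha _ := isCompact_Icc.exists_bound_of_continuousOn
    (hc.mono fun _ ht => lt_of_lt_of_le ha ht.1)

protected lemma norm (hf : IsConvKernel f) : IsConvKernel fun t => ‖f t‖ where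
  integrableOn T := (hf.integrableOn T).norm
  exists_bound a ha b := by simpa only [norm_norm] using hf.exists_bound a ha b

lemma intervalIntegrable (hf : IsConvKernel f) (ht : 0 ≤ t) : IntervalIntegrable f volume 0 t :=
  (intervalIntegrable_iff_integrableOn_Ioc_of_le ht).2 (hf.integrableOn t)

lemma aestronglyMeasurable_indicator (hf : IsConvKernel f) :
    AEStronglyMeasurable ((Ioi 0).indicator f) := by
  rw [aestronglyMeasurable_indicator_iff measurableSet_Ioi,
    ← iUnion_Ioc_eq_Ioi_self_iff.2 fun x _ => exists_nat_ge x, aestronglyMeasurable_iUnion_iff]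
  exact fun n => (hf.integrableOn n).aestronglyMeasurable

lemma intervalIntegrable_mul_firstHalf (hf : IsConvKernel f) (hg : IsConvKernel g) (ht : 0 < t) :
    IntervalIntegrable (fun τ => f (t - τ) * g τ) volume 0 (t / 2) := by
  obtain ⟨C, hC⟩ := hf.exists_bound (t / 2) (half_pos ht) t
  have hmeas : AEStronglyMeasurable (fun τ => f (t - τ)) (volume.restrict (Ioc 0 t)) := by
    have hrefl := (hf.intervalIntegrable ht.le).symm.comp_sub_left t
    rw [sub_self, sub_zero] at hrefl
    exact hrefl.aestronglyMeasurable
  rw [intervalIntegrable_iff_integrableOn_Ioc_of_le (half_pos ht).le]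
  refine (hg.integrableOn (t / 2)).bdd_mul
    (hmeas.mono_set (Ioc_subset_Ioc_right (half_le_self ht.le))) (c := C) ?_
  filter_upwards [ae_restrict_mem measurableSet_Ioc] with τ hτ
  exact hC _ ⟨by linarith [hτ.2], by linarith [hτ.1]⟩

lemma intervalIntegrable_mul_secondHalf (hf : IsConvKernel f) (hg : IsConvKernel g) (ht : 0 < t) :
    IntervalIntegrable (fun τ => f (t - τ) * g τ) volume (t / 2) t := by
  have hrefl := ((hg.intervalIntegrable_mul_firstHalf hf ht).comp_sub_left t).symm
  simpa only [sub_sub_cancel, sub_half, sub_zero, mul_comm] using hrefl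

lemma intervalIntegrable_mul (hf : IsConvKernel f) (hg : IsConvKernel g) (ht : 0 < t) :
    IntervalIntegrable (fun τ => f (t - τ) * g τ) volume 0 t :=
  (hf.intervalIntegrable_mul_firstHalf hg ht).trans (hf.intervalIntegrable_mul_secondHalf hg ht)

lemma lconv_eq_add_firstHalf (hf : IsConvKernel f) (hg : IsConvKernel g) (ht : 0 < t) :
    lconv f g t =
      (∫ τ in (0 : ℝ)..t / 2, f (t - τ) * g τ) + ∫ τ in (0 : ℝ)..t / 2, g (t - τ) * f τ := by
  have hrefl := integral_comp_sub_left (a := 0) (b := t / 2) (fun τ => f (t - τ) * g τ) t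
  simp only [sub_sub_cancel, sub_half, sub_zero] at hrefl
  simp only [mul_comm (g _), hrefl]
  exact (integral_add_adjacent_intervals (hf.intervalIntegrable_mul_firstHalf hg ht)
    (hf.intervalIntegrable_mul_secondHalf hg ht)).symm

lemma exists_bound_firstHalf (hf : IsConvKernel f) (hg : IsConvKernel g) {a : ℝ} (ha : 0 < a)
    (b : ℝ) : ∃ C, ∀ t ∈ Icc a b, ‖∫ τ in (0 : ℝ)..t / 2, f (t - τ) * g τ‖ ≤ C := by
  obtain ⟨C, hC⟩ := hf.exists_bound (a / 2) (half_pos ha) b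
  refine ⟨∫ τ in Ioc 0 b, |C| * ‖g τ‖, fun t ht => ?_⟩
  have ht0 : 0 < t := ha.trans_le ht.1
  have hint : IntegrableOn (fun τ => |C| * ‖g τ‖) (Ioc 0 b) := (hg.integrableOn b).norm.const_mul _
  have hsub : Ioc 0 (t / 2) ⊆ Ioc 0 b := Ioc_subset_Ioc_right (by linarith [ht.2])
  rw [integral_of_le (half_pos ht0).le]
  calc ‖∫ τ in Ioc 0 (t / 2), f (t - τ) * g τ‖
      ≤ ∫ τ in Ioc 0 (t / 2), |C| * ‖g τ‖ := by
        refine norm_integral_le_of_norm_le (hint.mono_set hsub) ?_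
        filter_upwards [ae_restrict_mem measurableSet_Ioc] with τ hτ
        have hfC : ‖f (t - τ)‖ ≤ C :=
          hC _ ⟨by linarith [ht.1, hτ.2], by linarith [ht.2, hτ.1]⟩
        rw [norm_mul]
        exact mul_le_mul_of_nonneg_right (hfC.trans (le_abs_self C)) (norm_nonneg _)
    _ ≤ ∫ τ in Ioc 0 b, |C| * ‖g τ‖ :=
        setIntegral_mono_set hint (Eventually.of_forall fun _ => by positivity) hsub.eventuallyLE

protected lemma lconv (hf : IsConvKernel f) (hg : IsConvKernel g) : IsConvKernel (lconv f g) where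
  integrableOn T := integrableOn_lconv (hf.integrableOn T) (hg.integrableOn T)
  exists_bound a ha b := by
    obtain ⟨C, hC⟩ := hf.exists_bound_firstHalf hg ha b
    obtain ⟨D, hD⟩ := hg.exists_bound_firstHalf hf ha b
    refine ⟨C + D, fun t ht => ?_⟩
    rw [hf.lconv_eq_add_firstHalf hg (ha.trans_le ht.1)]
    exact (norm_add_le _ _).trans (add_le_add (hC t ht) (hD t ht))

lemma convolutionExists (hf : IsConvKernel f) (hg : IsConvKernel g) :
    ConvolutionExists ((Ioi 0).indicator f) ((Ioi 0).indicator g)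
      (ContinuousLinearMap.mul ℝ ℝ) volume := by
  intro t
  have hsupp : (fun τ => (Ioi 0).indicator f τ * (Ioi 0).indicator g (t - τ)) =
      (Ioo 0 t).indicator fun τ => g (t - τ) * f τ := by
    funext τ
    simp only [indicator, mem_Ioi, mem_Ioo, sub_pos]
    split_ifs <;> simp_all [mul_comm]
  simp only [ConvolutionExistsAt, ContinuousLinearMap.mul_apply', hsupp]
  rw [integrable_indicator_iff measurableSet_Ioo]
  rcases le_or_gt t 0 with ht | ht
  · rw [Ioo_eq_empty ht.not_gt]
    exact integrableOn_empty
  · exact (intervalIntegrable_iff_integrableOn_Ioo_of_le ht.le).1 (hg.intervalIntegrable_mul hf ht)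

lemma lconv_assoc (hf : IsConvKernel f) (hg : IsConvKernel g) (hh : IsConvKernel h) (ht : 0 < t) :
    lconv (lconv f g) h t = lconv f (lconv g h) t := by
  have hnorm (u : ℝ → ℝ) :
      (fun x => ‖(Ioi 0).indicator u x‖) = (Ioi 0).indicator fun x => ‖u x‖ :=
    funext fun x => norm_indicator_eq_indicator_norm u x
  have hassoc := convolution_assoc (μ := volume) (ν := volume) (x₀ := t)
    (ContinuousLinearMap.mul ℝ ℝ) (ContinuousLinearMap.mul ℝ ℝ)
    (ContinuousLinearMap.mul ℝ ℝ) (ContinuousLinearMap.mul ℝ ℝ) mul_assoc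
    hf.aestronglyMeasurable_indicator hg.aestronglyMeasurable_indicator
    hh.aestronglyMeasurable_indicator (Eventually.of_forall (hf.convolutionExists hg))
    (Eventually.of_forall fun x => by
      simpa only [hnorm] using hg.norm.convolutionExists hh.norm x)
    (by
      simpa only [hnorm, convolution_indicator_Ioi_eq_indicator_lconv]
        using hf.norm.convolutionExists (hg.norm.lconv hh.norm) t)
  simpa only [convolution_indicator_Ioi_eq_indicator_lconv, indicator_of_mem (mem_Ioi.2 ht)]
    using hassoc

end IsConvKernel

namespace CMinusOne

variable {f : ℝ → ℝ}

lemma continuousOn (hf : CMinusOne f) : ContinuousOn f (Ioi 0) := by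
  obtain ⟨p, -, f₁, hf₁, hf_eq⟩ := hf
  refine ContinuousOn.congr (fun t ht => ?_) hf_eq
  exact (continuousAt_rpow_const t p (Or.inl ht.ne')).continuousWithinAt.mul
    ((hf₁.mono Ioi_subset_Ici_self) t ht)

lemma integrableOn (hf : CMinusOne f) (T : ℝ) : IntegrableOn f (Ioc 0 T) := by
  obtain ⟨p, hp, f₁, hf₁, hf_eq⟩ := hf
  rcases le_or_gt T 0 with hT | hT
  · rw [Ioc_eq_empty hT.not_gt]
    exact integrableOn_empty
  · have hf₁' : ContinuousOn f₁ (uIcc 0 T) :=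
      hf₁.mono (uIcc_of_le hT.le ▸ Icc_subset_Ici_self)
    have hint := (intervalIntegrable_rpow' (a := 0) (b := T) hp).mul_continuousOn hf₁'
    exact ((intervalIntegrable_iff_integrableOn_Ioc_of_le hT.le).1 hint).congr_fun
      (fun t ht => (hf_eq t ht.1).symm) measurableSet_Ioc

lemma isConvKernel (hf : CMinusOne f) : IsConvKernel f :=
  .of_continuousOn hf.continuousOn hf.integrableOn

end CMinusOne

section Sonin

variable {κ k f φ : ℝ → ℝ} {t : ℝ}

lemma lconv_eq_integral_of_sonin (hκ : IsConvKernel κ) (hk : IsConvKernel k)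
    (hκk : ∀ t > 0, lconv κ k t = 1) (hφ : IsConvKernel φ) (hf : ∀ t > 0, f t = lconv κ φ t)
    (ht : 0 < t) : lconv k f t = ∫ τ in (0 : ℝ)..t, φ τ :=
  calc lconv k f t
      = lconv k (lconv κ φ) t := lconv_congr ht.le (eqOn_refl _ _) fun τ hτ => hf τ hτ.1
    _ = lconv (lconv κ k) φ t := by rw [← hk.lconv_assoc hκ hφ ht, lconv_comm k κ]
    _ = lconv (fun _ => 1) φ t := lconv_congr ht.le (fun τ hτ => hκk τ hτ.1) (eqOn_refl _ _)
    _ = ∫ τ in (0 : ℝ)..t, φ τ := lconv_one_left φ t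

lemma hasDerivAt_lconv_of_sonin (hκ : IsConvKernel κ) (hk : IsConvKernel k)
    (hκk : ∀ t > 0, lconv κ k t = 1) (hφc : ContinuousOn φ (Ioi 0))
    (hφi : ∀ T, IntegrableOn φ (Ioc 0 T)) (hf : ∀ t > 0, f t = lconv κ φ t) (ht : 0 < t) :
    HasDerivAt (lconv k f) (φ t) t := by
  have hφ : IsConvKernel φ := .of_continuousOn hφc hφi
  have hprim : HasDerivAt (fun T => ∫ τ in (0 : ℝ)..T, φ τ) (φ t) t :=
    integral_hasDerivAt_right (hφ.intervalIntegrable ht.le)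
      (hφc.stronglyMeasurableAtFilter isOpen_Ioi t ht) (hφc.continuousAt (Ioi_mem_nhds ht))
  refine hprim.congr_of_eventuallyEq ?_
  filter_upwards [Ioi_mem_nhds ht] with T hT
  exact lconv_eq_integral_of_sonin hκ hk hκk hφ hf hT

theorem GFD_RL_right_inverse_general (hκ : IsConvKernel κ) (hk : IsConvKernel k)
    (hκk : ∀ t > 0, lconv κ k t = 1) (hφc : ContinuousOn φ (Ioi 0))
    (hφi : ∀ T, IntegrableOn φ (Ioc 0 T)) (hf : ∀ t > 0, f t = lconv κ φ t) :
    (∀ t > 0, DifferentiableAt ℝ (lconv k f) t) ∧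
      ∀ t > 0, lconv κ (deriv (lconv k f)) t = f t := by
  have hderiv : ∀ t > 0, HasDerivAt (lconv k f) (φ t) t := fun t ht =>
    hasDerivAt_lconv_of_sonin hκ hk hκk hφc hφi hf ht
  refine ⟨fun t ht => (hderiv t ht).differentiableAt, fun t ht => ?_⟩
  rw [hf t ht]
  exact lconv_congr ht.le (eqOn_refl _ _) fun τ hτ => (hderiv τ hτ.1).deriv

end Sonin

end

/-- The GFD of Riemann–Liouville type is a right inverse to the GFI on
`C_{-1,(κ)}(0,∞)`: for `(κ, k) ∈ L₁` and `f = κ * φ` with `φ ∈ C_{-1}(0,∞)`, the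
function `k * f` is differentiable on `(0,∞)` and `(κ * D_{(k)} f)(t) = f(t)` for
all `t > 0`. -/
theorem GFD_RL_right_inverse (κ k f φ : ℝ → ℝ) (hκk : SoninPair κ k)
    (hφ : CMinusOne φ) (hfφ : ∀ t > (0:ℝ), f t = lconv κ φ t) :
    (∀ t > (0:ℝ), DifferentiableAt ℝ (lconv k f) t) ∧
      ∀ t > (0:ℝ), lconv κ (deriv (lconv k f)) t = f t :=
  GFD_RL_right_inverse_general hκk.1.isConvKernel hκk.2.1.isConvKernel hκk.2.2
    hφ.continuousOn hφ.integrableOn hfφ
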